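/- (Lemma D.2, robustness of the empirical risk minimizer) Let F be a class of functions from X to the finite label set Y, fix a training set (x_1,y_1),...,(x_n,y_n) ∈ (X×Y)^n, and let α = min_{g∈F} (1/n)·#{i : g(x_i) ≠ y_i}. Let Ỹ be the η-noisy labels, and let f̃ be any function achieving the minimum of #{i : g(x_i) ≠ Ỹ_i} over g ∈ F. Then E[(1/n)·#{i : f̃(x_i) = y_i}] ≥ (1 − α) − 2η, where the expectation is over the noise; that is, the robustness gap of the empirical risk minimization training procedure is at most 2η. -/

import Mathlib

/-! Mistake counts are Hamming distances between label vectors. If `z` denotes the noisy labels and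
`f` is at least as close to `z` as `g` is, two triangle inequalities through `z` give
`d(f, y) ≤ d(g, y) + 2 d(z, y)`. The expectation of `d(z, y)` is the sum of the probabilities that
the individual labels get corrupted, so only the marginal laws of the noise matter. -/

open MeasureTheory
open scoped ENNReal

instance (priority := 100) optionMeasurableSpace {α : Type*} : MeasurableSpace (Option α) := ⊤

/-- Distribution of a single noise coordinate: with probability `1 - η` the label is kept
(`none`), and with probability `η` it is replaced by a uniform label (`some b`, each with
probability `η/k`). -/
noncomputable def noiseMeasure (k : ℕ) (η : ℝ) : Measure (Option (Fin k)) :=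
  ENNReal.ofReal (1 - η) • Measure.dirac none +
    ∑ b : Fin k, ENNReal.ofReal (η / k) • Measure.dirac (some b)

/-- The joint distribution of the `n` independent noise coordinates. -/
noncomputable def noisePi (n k : ℕ) (η : ℝ) : Measure (Fin n → Option (Fin k)) :=
  Measure.pi fun _ => noiseMeasure k η

section HammingDist

variable {ι : Type*} [Fintype ι] {β : ι → Type*} [∀ i, DecidableEq (β i)]

lemma natCard_ne_eq_hammingDist (u v : ∀ i, β i) :
    Nat.card {i // u i ≠ v i} = hammingDist u v := by
  rw [Nat.card_eq_fintype_card, Fintype.card_subtype, hammingDist]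

lemma natCard_eq_div_natCard [Nonempty ι] (u v : ∀ i, β i) :
    (Nat.card {i // u i = v i} : ℝ) / Nat.card ι = 1 - hammingDist u v / Nat.card ι := by
  have hsplit : Nat.card {i // u i = v i} + hammingDist u v = Nat.card ι := by
    rw [Nat.card_eq_fintype_card, Nat.card_eq_fintype_card, Fintype.card_subtype, hammingDist,
      Finset.card_filter_add_card_filter_not, Finset.card_univ]
  have hcard : (Nat.card ι : ℝ) ≠ 0 := Nat.cast_ne_zero.mpr Nat.card_pos.ne'
  rw [eq_sub_iff_add_eq, ← add_div, ← Nat.cast_add, hsplit, div_self hcard]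

lemma hammingDist_le_add_two_mul {f g z : ∀ i, β i} (y : ∀ i, β i)
    (hfg : hammingDist f z ≤ hammingDist g z) :
    hammingDist f y ≤ hammingDist g y + 2 * hammingDist z y :=
  calc hammingDist f y
      ≤ hammingDist f z + hammingDist z y := hammingDist_triangle f z y
    _ ≤ hammingDist g z + hammingDist z y := by gcongr
    _ ≤ (hammingDist g y + hammingDist z y) + hammingDist z y := by
        gcongr
        exact hammingDist_triangle_right g z y
    _ = hammingDist g y + 2 * hammingDist z y := by ring

variable {Ω : Type*}

lemma cast_hammingDist_eq_sum_indicator (u v : Ω → ∀ i, β i) (ω : Ω) :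
    (hammingDist (u ω) (v ω) : ℝ) = ∑ i, {ω | u ω i ≠ v ω i}.indicator 1 ω := by
  simp only [hammingDist, Set.indicator_apply, Set.mem_ofPred_eq, Pi.one_apply, Finset.sum_boole]

variable [MeasurableSpace Ω] {P : Measure Ω} {u v : Ω → ∀ i, β i}

lemma integrable_hammingDist [IsFiniteMeasure P] (huv : ∀ i, MeasurableSet {ω | u ω i ≠ v ω i}) :
    Integrable (fun ω ↦ (hammingDist (u ω) (v ω) : ℝ)) P := by
  simp only [cast_hammingDist_eq_sum_indicator]
  exact integrable_finsetSum _ fun i _ ↦ (integrable_const 1).indicator (huv i)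

lemma integral_hammingDist [IsFiniteMeasure P] (huv : ∀ i, MeasurableSet {ω | u ω i ≠ v ω i}) :
    ∫ ω, (hammingDist (u ω) (v ω) : ℝ) ∂P = ∑ i, P.real {ω | u ω i ≠ v ω i} := by
  simp only [cast_hammingDist_eq_sum_indicator]
  rw [integral_finsetSum _ fun i _ ↦ (integrable_const 1).indicator (huv i)]
  exact Finset.sum_congr rfl fun i _ ↦ integral_indicator_one (huv i)

lemma integral_hammingDist_le_add_two_mul [IsProbabilityMeasure P] {z f : Ω → ∀ i, β i}
    {y g : ∀ i, β i} (hz : ∀ i, MeasurableSet {ω | z ω i ≠ y i})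
    (hf : ∀ i, MeasurableSet {ω | f ω i ≠ y i})
    (hfg : ∀ᵐ ω ∂P, hammingDist (f ω) (z ω) ≤ hammingDist g (z ω)) :
    ∫ ω, (hammingDist (f ω) y : ℝ) ∂P ≤
      hammingDist g y + 2 * ∫ ω, (hammingDist (z ω) y : ℝ) ∂P := by
  have hz_int : Integrable (fun ω ↦ 2 * (hammingDist (z ω) y : ℝ)) P :=
    (integrable_hammingDist hz).const_mul 2
  calc ∫ ω, (hammingDist (f ω) y : ℝ) ∂P
      ≤ ∫ ω, ((hammingDist g y : ℝ) + 2 * hammingDist (z ω) y) ∂P := by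
        refine integral_mono_ae (integrable_hammingDist hf) ((integrable_const _).add hz_int) ?_
        filter_upwards [hfg] with ω hω
        exact_mod_cast hammingDist_le_add_two_mul y hω
    _ = hammingDist g y + 2 * ∫ ω, (hammingDist (z ω) y : ℝ) ∂P := by
        rw [integral_add (integrable_const _) hz_int, integral_const_mul, integral_const,
          probReal_univ, one_smul]

end HammingDist

/-- Here `y` and `z` are the clean and the noisy labels, while `f` and `g` are the predictions, at
the training points, of the trained classifier and of a competitor in the class. -/
theorem erm_robustness_general {ι Y Ω : Type*} [Finite ι] [Nonempty ι] [MeasurableSpace Ω]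
    {P : Measure Ω} [IsProbabilityMeasure P] {η : ℝ} {y g : ι → Y} {z f : Ω → ι → Y}
    (hz : ∀ i, MeasurableSet {ω | z ω i ≠ y i}) (hf : ∀ i, MeasurableSet {ω | f ω i ≠ y i})
    (hη : ∀ i, P.real {ω | z ω i ≠ y i} ≤ η)
    (hfg : ∀ᵐ ω ∂P, Nat.card {i // f ω i ≠ z ω i} ≤ Nat.card {i // g i ≠ z ω i}) :
    (1 - (Nat.card {i // g i ≠ y i} : ℝ) / Nat.card ι) - 2 * η ≤
      ∫ ω, (Nat.card {i // f ω i = y i} : ℝ) / Nat.card ι ∂P := by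
  classical
  have := Fintype.ofFinite ι
  simp only [natCard_ne_eq_hammingDist] at hfg ⊢
  have hcorrupted : ∫ ω, (hammingDist (z ω) y : ℝ) ∂P ≤ Nat.card ι * η := by
    rw [integral_hammingDist hz, Nat.card_eq_fintype_card, ← nsmul_eq_mul]
    exact Finset.sum_le_card_nsmul _ _ _ fun i _ ↦ hη i
  have hcard : (0 : ℝ) < Nat.card ι := Nat.cast_pos.mpr Nat.card_pos
  calc (1 - (hammingDist g y : ℝ) / Nat.card ι) - 2 * η
      = 1 - (hammingDist g y + 2 * (Nat.card ι * η)) / Nat.card ι := by field_simp; ring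
    _ ≤ 1 - (hammingDist g y + 2 * ∫ ω, (hammingDist (z ω) y : ℝ) ∂P) / Nat.card ι := by gcongr
    _ ≤ 1 - (∫ ω, (hammingDist (f ω) y : ℝ) ∂P) / Nat.card ι := by
        gcongr
        exact integral_hammingDist_le_add_two_mul hz hf hfg
    _ = ∫ ω, (Nat.card {i // f ω i = y i} : ℝ) / Nat.card ι ∂P := by
        simp only [natCard_eq_div_natCard]
        rw [integral_sub (integrable_const 1) ((integrable_hammingDist hf).div_const _),
          integral_div, integral_const, probReal_univ, one_smul]

section Noise

instance {α : Type*} : DiscreteMeasurableSpace (Option α) := ⟨fun _ ↦ trivial⟩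

variable {n k : ℕ} {η : ℝ}

lemma isProbabilityMeasure_noiseMeasure (hk : k ≠ 0) (hη0 : 0 ≤ η) (hη1 : η ≤ 1) :
    IsProbabilityMeasure (noiseMeasure k η) where
  measure_univ := by
    have hreplace : (k : ℝ≥0∞) * ENNReal.ofReal (η / k) = ENNReal.ofReal η := by
      rw [← ENNReal.ofReal_natCast, ← ENNReal.ofReal_mul k.cast_nonneg,
        mul_div_cancel₀ _ (Nat.cast_ne_zero.mpr hk)]
    simp [noiseMeasure, hreplace, ← ENNReal.ofReal_add (sub_nonneg.mpr hη1) hη0]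

lemma noiseMeasure_real_none (hη1 : η ≤ 1) : (noiseMeasure k η).real {none} = 1 - η := by
  simp [noiseMeasure, measureReal_def, hη1]

lemma isProbabilityMeasure_noisePi (hk : k ≠ 0) (hη0 : 0 ≤ η) (hη1 : η ≤ 1) :
    IsProbabilityMeasure (noisePi n k η) := by
  have := isProbabilityMeasure_noiseMeasure hk hη0 hη1
  unfold noisePi
  infer_instance

lemma noisePi_real_ne_none (hk : k ≠ 0) (hη0 : 0 ≤ η) (hη1 : η ≤ 1) (i : Fin n) :
    (noisePi n k η).real {N | N i ≠ none} = η := by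
  have := isProbabilityMeasure_noiseMeasure hk hη0 hη1
  calc (noisePi n k η).real {N | N i ≠ none}
      = (noiseMeasure k η).real {none}ᶜ :=
        (measurePreserving_eval (fun _ ↦ noiseMeasure k η) i).measureReal_preimage
          (s := {none}ᶜ) MeasurableSet.of_discrete.nullMeasurableSet
    _ = η := by
        rw [probReal_compl_eq_one_sub .of_discrete, noiseMeasure_real_none hη1, sub_sub_cancel]

lemma noisePi_real_getD_ne_le (hk : k ≠ 0) (hη0 : 0 ≤ η) (hη1 : η ≤ 1) (y : Fin n → Fin k)
    (i : Fin n) : (noisePi n k η).real {N | (N i).getD (y i) ≠ y i} ≤ η := by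
  have := isProbabilityMeasure_noisePi (n := n) hk hη0 hη1
  have hsubset : {N : Fin n → Option (Fin k) | (N i).getD (y i) ≠ y i} ⊆ {N | N i ≠ none} :=
    fun N hN hnone ↦ hN (by rw [hnone, Option.getD_none])
  exact (measureReal_mono hsubset).trans_eq (noisePi_real_ne_none hk hη0 hη1 i)

end Noise

/-- Lemma D.2 (robustness of the empirical risk minimizer).  Let `F` be a class of
functions `X → Fin k`, fix a training set `(x_i, y_i)_{i<n}`, and let `α` be the minimum
over `g ∈ F` of the fraction of training mistakes of `g` against the clean labels.  If,
for every noise outcome `N`, `f̃ N ∈ F` minimizes over `F` the number of mistakes against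
the `η`-noisy labels `(N i).getD (y i)`, then the expected fraction of training points on
which `f̃` agrees with the original labels is at least `(1 − α) − 2η`; that is, the
robustness gap of empirical risk minimization is at most `2η`. -/
theorem erm_robustness {X : Type*} {k n : ℕ} (hk : 2 ≤ k) (hn : 0 < n)
    {η : ℝ} (hη0 : 0 < η) (hη1 : η < 1)
    (F : Set (X → Fin k)) (x : Fin n → X) (y : Fin n → Fin k) (α : ℝ)
    (hα : IsLeast ((fun g => (Nat.card {i : Fin n // g (x i) ≠ y i} : ℝ) / n) '' F) α)
    (ftil : (Fin n → Option (Fin k)) → X → Fin k)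
    (hmem : ∀ N, ftil N ∈ F)
    (hmin : ∀ (N : Fin n → Option (Fin k)), ∀ g ∈ F,
      Nat.card {i : Fin n // ftil N (x i) ≠ (N i).getD (y i)} ≤
        Nat.card {i : Fin n // g (x i) ≠ (N i).getD (y i)}) :
    (1 - α) - 2 * η ≤
      ∫ N, ((Nat.card {i : Fin n // ftil N (x i) = y i} : ℝ) / n) ∂(noisePi n k η) := by
  have hk0 : k ≠ 0 := by omega
  have := isProbabilityMeasure_noisePi (n := n) hk0 hη0.le hη1.le
  have : Nonempty (Fin n) := Fin.pos_iff_nonempty.mp hn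
  obtain ⟨⟨g, hgF, rfl⟩, -⟩ := hα
  simpa only [Nat.card_fin] using erm_robustness_general
    (fun _ ↦ .of_discrete) (fun _ ↦ .of_discrete)
    (noisePi_real_getD_ne_le hk0 hη0.le hη1.le y) (.of_forall fun N ↦ hmin N g hgF)
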